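/- arXiv:1203.2208 — 3 statements merged into one kernel-verified Lean document; each statement's English description precedes it below -/
import Mathlib

section
/- For all real numbers 0 < p < ∞ and 0 < q < ∞ and integers 0 ≤ l ≤ k with l = 1/q − 1/p, there exists a constant C = C(k, p, q) > 0 such that for every integer n ≥ max(k, 2) and every polynomial P ∈ Δ_n^{(k)}, one has ‖P^{(l)}‖_{L_q[−1,1]} ≤ C · (log n)^l · ‖P‖_{L_p[−1,1]}. -/
/-!
For a positive `f` with `f' ≥ 0` on `[a, b]`, Hölder's inequality applied to `f' = (f' / f) * f`
gives `‖f'‖_q ≤ log (f b / f a) * ‖f‖_p` when `1 / q = 1 + 1 / p`. A polynomial `P` with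
`P, P' ≥ 0` may be arbitrarily small at `a`, so this is applied to `f = P + δ` with
`δ = P(b) / n ^ (2 / p)`: then `f b / f a ≤ 1 + n ^ (2 / p)`, whose logarithm is `O(log n)`. The
shift costs only a constant factor because `P(b) ^ p * (b - a) ≤ C * n ^ 2 * ‖P‖_p ^ p`: by
Chebyshev's extremal property, `P` varies by at most the factor `cosh 1` on an interval of length of
order `(b - a) / n ^ 2` ending at `b`. Iterating gives the bound for the `l`-th derivative.
-/

open Polynomial MeasureTheory

/-- The `L_q` quasinorm of `f` on `[a,b]` for `0 < q < ∞`. -/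
noncomputable def LqNorm (f : ℝ → ℝ) (q a b : ℝ) : ℝ :=
  (∫ x in a..b, |f x| ^ q) ^ (1 / q)

/-- The sup norm of `f` on `[a,b]`. -/
noncomputable def LinfNorm (f : ℝ → ℝ) (a b : ℝ) : ℝ :=
  sSup ((fun x => |f x|) '' Set.Icc a b)

/-- The `L_q` norm on `[a,b]` for `0 < q ≤ ∞`, `q : ℝ≥0∞`. -/
noncomputable def Lnorm (f : ℝ → ℝ) (q : ENNReal) (a b : ℝ) : ℝ :=
  if q = ⊤ then LinfNorm f a b else LqNorm f q.toReal a b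

/-- `P ∈ Δ_n^(k)`: a real polynomial of degree at most `n` all of whose derivatives of
order `0 ≤ m ≤ k` are nonnegative on `[-1,1]`. -/
def AbsMono (P : Polynomial ℝ) (n k : ℕ) : Prop :=
  P.natDegree ≤ n ∧
    ∀ m ≤ k, ∀ x ∈ Set.Icc (-1 : ℝ) 1, 0 ≤ (derivative^[m] P).eval x

section LqNorm

variable {f g : ℝ → ℝ} {a b p q r c : ℝ}

lemma lqNorm_nonneg (hab : a ≤ b) : 0 ≤ LqNorm f p a b :=
  Real.rpow_nonneg (intervalIntegral.integral_nonneg hab fun _ _ => by positivity) _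

lemma lqNorm_le_rpow_mul_of_integral_le (hp : 0 ≤ p) (hc : 0 ≤ c) (hab : a ≤ b)
    (h : ∫ x in a..b, |f x| ^ p ≤ c * ∫ x in a..b, |g x| ^ p) :
    LqNorm f p a b ≤ c ^ (1 / p) * LqNorm g p a b := by
  have hint (u : ℝ → ℝ) : 0 ≤ ∫ x in a..b, |u x| ^ p :=
    intervalIntegral.integral_nonneg hab fun _ _ => by positivity
  rw [LqNorm, LqNorm, ← Real.mul_rpow hc (hint g)]
  exact Real.rpow_le_rpow (hint f) h (by positivity)

lemma memLp_restrict_Ioc_of_continuousOn {s : ENNReal} (hf : ContinuousOn f (Set.Icc a b)) :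
    MemLp f s (volume.restrict (Set.Ioc a b)) := by
  obtain ⟨M, hM⟩ := isCompact_Icc.exists_bound_of_continuousOn hf
  refine MemLp.of_bound
    ((hf.mono Set.Ioc_subset_Icc_self).aestronglyMeasurable measurableSet_Ioc) M ?_
  filter_upwards [ae_restrict_mem measurableSet_Ioc] with x hx
  exact hM x (Set.Ioc_subset_Icc_self hx)

lemma lqNorm_mul_le (h : p.HolderTriple q r) (hab : a ≤ b) (hf : ContinuousOn f (Set.Icc a b))
    (hg : ContinuousOn g (Set.Icc a b)) :
    LqNorm (fun x => f x * g x) r a b ≤ LqNorm f p a b * LqNorm g q a b := by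
  have hr : 0 < r := h.pos'
  have hint (u : ℝ → ℝ) (s : ℝ) : 0 ≤ ∫ x in a..b, |u x| ^ s :=
    intervalIntegral.integral_nonneg hab fun _ _ => by positivity
  have hpow {u : ℝ → ℝ} (hu : ContinuousOn u (Set.Icc a b)) :
      ContinuousOn (fun x => |u x| ^ r) (Set.Icc a b) :=
    hu.abs.rpow_const fun _ _ => Or.inr hr.le
  have holder := integral_mul_le_Lp_mul_Lq_of_nonneg h.holderConjugate_div_div
    (f := fun x => |f x| ^ r) (g := fun x => |g x| ^ r) (.of_forall fun _ => by positivity)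
    (.of_forall fun _ => by positivity)
    (memLp_restrict_Ioc_of_continuousOn (hpow hf)) (memLp_restrict_Ioc_of_continuousOn (hpow hg))
  simp only [← intervalIntegral.integral_of_le hab, ← Real.rpow_mul (abs_nonneg _),
    mul_div_cancel₀ _ hr.ne', one_div_div, ← Real.mul_rpow (abs_nonneg _) (abs_nonneg _),
    ← abs_mul] at holder
  calc LqNorm (fun x => f x * g x) r a b
      ≤ ((∫ x in a..b, |f x| ^ p) ^ (r / p) * (∫ x in a..b, |g x| ^ q) ^ (r / q)) ^ (1 / r) :=
        Real.rpow_le_rpow (hint _ _) holder (by positivity)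
    _ = LqNorm f p a b * LqNorm g q a b := by
        rw [Real.mul_rpow (Real.rpow_nonneg (hint _ _) _) (Real.rpow_nonneg (hint _ _) _),
          ← Real.rpow_mul (hint _ _), ← Real.rpow_mul (hint _ _), div_mul_div_cancel₀' hr.ne',
          div_mul_div_cancel₀' hr.ne', LqNorm, LqNorm]

end LqNorm

lemma lqNorm_one_logDeriv {f f' : ℝ → ℝ} {a b : ℝ} (hab : a ≤ b)
    (hf : ∀ x ∈ Set.Icc a b, HasDerivAt f (f' x) x) (hf' : ContinuousOn f' (Set.Icc a b))
    (hpos : ∀ x ∈ Set.Icc a b, 0 < f x) (hf'0 : ∀ x ∈ Set.Icc a b, 0 ≤ f' x) :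
    LqNorm (fun x => f' x / f x) 1 a b = Real.log (f b / f a) := by
  have hcont : ContinuousOn (fun x => f' x / f x) (Set.Icc a b) :=
    hf'.div (HasDerivAt.continuousOn hf) fun x hx => (hpos x hx).ne'
  have hlog : ∫ x in a..b, f' x / f x = Real.log (f b) - Real.log (f a) :=
    intervalIntegral.integral_eq_sub_of_hasDerivAt
      (fun x hx => by
        rw [Set.uIcc_of_le hab] at hx
        exact (hf x hx).log (hpos x hx).ne')
      (hcont.intervalIntegrable_of_Icc hab)
  have habs : ∫ x in a..b, |f' x / f x| ^ (1 : ℝ) = ∫ x in a..b, f' x / f x :=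
    intervalIntegral.integral_congr fun x hx => by
      rw [Set.uIcc_of_le hab] at hx
      simp only [Real.rpow_one, abs_of_nonneg (div_nonneg (hf'0 x hx) (hpos x hx).le)]
  rw [LqNorm, habs, hlog, div_one, Real.rpow_one, Real.log_div (hpos b ⟨hab, le_rfl⟩).ne'
    (hpos a ⟨le_rfl, hab⟩).ne']

lemma lqNorm_deriv_le_log_mul_lqNorm {f f' : ℝ → ℝ} {a b p q : ℝ}
    (hpq : Real.HolderTriple 1 p q) (hab : a ≤ b)
    (hf : ∀ x ∈ Set.Icc a b, HasDerivAt f (f' x) x) (hf' : ContinuousOn f' (Set.Icc a b))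
    (hpos : ∀ x ∈ Set.Icc a b, 0 < f x) (hf'0 : ∀ x ∈ Set.Icc a b, 0 ≤ f' x) :
    LqNorm f' q a b ≤ Real.log (f b / f a) * LqNorm f p a b := by
  have hfc : ContinuousOn f (Set.Icc a b) := HasDerivAt.continuousOn hf
  have hfactor : LqNorm f' q a b = LqNorm (fun x => f' x / f x * f x) q a b := by
    unfold LqNorm
    congr 1
    refine intervalIntegral.integral_congr fun x hx => ?_
    rw [Set.uIcc_of_le hab] at hx
    simp only [div_mul_cancel₀ _ (hpos x hx).ne']
  rw [hfactor, ← lqNorm_one_logDeriv hab hf hf' hpos hf'0]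
  exact lqNorm_mul_le hpq hab (hf'.div hfc fun x hx => (hpos x hx).ne') hfc

lemma add_rpow_le_two_rpow_mul {x y p : ℝ} (hx : 0 ≤ x) (hy : 0 ≤ y) (hp : 0 ≤ p) :
    (x + y) ^ p ≤ 2 ^ p * (x ^ p + y ^ p) := by
  have hmax : max x y ^ p ≤ x ^ p + y ^ p := by
    rcases max_choice x y with h | h <;> rw [h]
    · exact le_add_of_nonneg_right (Real.rpow_nonneg hy p)
    · exact le_add_of_nonneg_left (Real.rpow_nonneg hx p)
  calc (x + y) ^ p ≤ (2 * max x y) ^ p :=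
        Real.rpow_le_rpow (by positivity) (by linarith [le_max_left x y, le_max_right x y]) hp
    _ = 2 ^ p * max x y ^ p := Real.mul_rpow zero_le_two (le_max_of_le_left hx)
    _ ≤ 2 ^ p * (x ^ p + y ^ p) := by gcongr

lemma integral_abs_add_const_rpow_le {f : ℝ → ℝ} {a b p : ℝ} (hp : 0 ≤ p) (hab : a ≤ b)
    (hf : ContinuousOn f (Set.Icc a b)) (c : ℝ) :
    ∫ x in a..b, |f x + c| ^ p ≤ 2 ^ p * ((∫ x in a..b, |f x| ^ p) + |c| ^ p * (b - a)) := by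
  have hpow {u : ℝ → ℝ} (hu : ContinuousOn u (Set.Icc a b)) :
      IntervalIntegrable (fun x => |u x| ^ p) volume a b :=
    (hu.abs.rpow_const fun _ _ => Or.inr hp).intervalIntegrable_of_Icc hab
  calc ∫ x in a..b, |f x + c| ^ p
      ≤ ∫ x in a..b, 2 ^ p * (|f x| ^ p + |c| ^ p) := by
        refine intervalIntegral.integral_mono_on hab (hpow (hf.add continuousOn_const))
          (((hpow hf).add intervalIntegrable_const).const_mul _) fun x _ => ?_
        exact (Real.rpow_le_rpow (abs_nonneg _) (abs_add_le _ _) hp).trans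
          (add_rpow_le_two_rpow_mul (abs_nonneg _) (abs_nonneg _) hp)
    _ = 2 ^ p * ((∫ x in a..b, |f x| ^ p) + |c| ^ p * (b - a)) := by
        rw [intervalIntegral.integral_const_mul,
          intervalIntegral.integral_add (hpow hf) intervalIntegrable_const,
          intervalIntegral.integral_const, smul_eq_mul, mul_comm (b - a)]

lemma eq_zero_of_eval_eq_zero_on_Icc {P : ℝ[X]} {a b : ℝ} (hab : a < b)
    (h : ∀ x ∈ Set.Icc a b, P.eval x = 0) : P = 0 :=
  P.eq_zero_of_infinite_isRoot ((Set.Icc_infinite hab).mono h)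

lemma eval_le_mul_eval_chebyshev_T {P : ℝ[X]} {n : ℕ} {a b M x : ℝ} (hdeg : P.natDegree ≤ n)
    (hab : a < b) (hbx : b ≤ x) (hM : ∀ t ∈ Set.Icc a b, |P.eval t| ≤ M) :
    P.eval x ≤ M * (Chebyshev.T ℝ n).eval ((2 * x - a - b) / (b - a)) := by
  have hba : 0 < b - a := sub_pos.2 hab
  rcases ((abs_nonneg _).trans (hM a ⟨le_rfl, hab.le⟩)).eq_or_lt with rfl | hM0
  · have hP : P = 0 := eq_zero_of_eval_eq_zero_on_Icc hab fun t ht => abs_nonpos_iff.1 (hM t ht)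
    simp [hP]
  set Q : ℝ[X] := C M⁻¹ * P.comp (C ((b - a) / 2) * X + C ((a + b) / 2)) with hQ
  have hQeval (z : ℝ) : Q.eval z = M⁻¹ * P.eval ((b - a) / 2 * z + (a + b) / 2) := by simp [hQ]
  have hQdeg : Q.degree ≤ n := by
    refine degree_le_of_natDegree_le ?_
    calc Q.natDegree
        ≤ P.natDegree * (C ((b - a) / 2) * X + C ((a + b) / 2)).natDegree :=
          (natDegree_C_mul_le _ _).trans natDegree_comp_le
      _ ≤ n * 1 := Nat.mul_le_mul hdeg natDegree_linear_le
      _ = n := mul_one n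
  have hQbound : ∀ z ∈ Set.Icc (-1 : ℝ) 1, |Q.eval z| ≤ 1 := by
    intro z hz
    rw [hQeval, abs_mul, abs_of_pos (inv_pos.2 hM0), inv_mul_le_one₀ hM0]
    exact hM _ ⟨by nlinarith [hz.1], by nlinarith [hz.2]⟩
  have hx1 : 1 ≤ (2 * x - a - b) / (b - a) := (one_le_div hba).2 (by linarith)
  have hcheb : Q.eval ((2 * x - a - b) / (b - a)) ≤ _ :=
    Chebyshev.eval_iterate_derivative_le_of_forall_abs_le_one (k := 0) hx1 hQdeg hQbound
  have hxz : (b - a) / 2 * ((2 * x - a - b) / (b - a)) + (a + b) / 2 = x := by field_simp; ring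
  rwa [hQeval, hxz, inv_mul_le_iff₀ hM0] at hcheb

lemma one_add_half_sq_le_cosh (x : ℝ) : 1 + x ^ 2 / 2 ≤ Real.cosh x := by
  have hcosh : Real.cosh x = 1 + 2 * Real.sinh (x / 2) ^ 2 := by
    rw [← mul_div_cancel₀ x two_ne_zero, Real.cosh_two_mul, Real.cosh_sq,
      mul_div_cancel₀ x two_ne_zero]
    ring
  have hsinh : (x / 2) ^ 2 ≤ Real.sinh (x / 2) ^ 2 :=
    sq_le_sq.2 (Real.abs_sinh _ ▸ Real.self_le_sinh_iff.2 (abs_nonneg _))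
  linarith

lemma cosh_one_le_two : Real.cosh 1 ≤ 2 := by
  have hexp : Real.exp (-1) ≤ 1 := Real.exp_le_one_iff.2 (by norm_num)
  rw [Real.cosh_eq]
  linarith [Real.exp_one_lt_d9]

lemma exists_mem_Ioo_forall_eval_le_cosh_one_mul {n : ℕ} {a b : ℝ} (hn : 1 ≤ n) (hab : a < b) :
    ∃ c ∈ Set.Ioo a b, b - a ≤ 6 * n ^ 2 * (b - c) ∧ ∀ P : ℝ[X], P.natDegree ≤ n →
      ∀ M, (∀ x ∈ Set.Icc a c, |P.eval x| ≤ M) → P.eval b ≤ Real.cosh 1 * M := by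
  have hn0 : (0 : ℝ) < n := by exact_mod_cast hn
  have hba : 0 < b - a := sub_pos.2 hab
  set y := Real.cosh (1 / n) with hy
  have hylow : 1 + 1 / (2 * (n : ℝ) ^ 2) ≤ y :=
    le_of_eq_of_le (by field_simp) (one_add_half_sq_le_cosh (1 / n))
  have hy1 : 1 < y := lt_of_lt_of_le (lt_add_of_pos_right _ (by positivity)) hylow
  have hy2 : y ≤ 2 := by
    refine le_trans (Real.cosh_le_cosh.2 ?_) cosh_one_le_two
    rw [abs_of_pos (by positivity), abs_one]
    exact (div_le_one hn0).2 (by exact_mod_cast hn)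
  -- `c` is chosen so that the affine map sending `[a, c]` to `[-1, 1]` sends `b` to `y`.
  set c := a + 2 * (b - a) / (y + 1) with hc
  have hac : a < c := lt_add_of_pos_right a (by positivity)
  have hbc : b - c = (b - a) * (y - 1) / (y + 1) := by rw [hc]; field_simp; ring
  have hcb : c < b := sub_pos.1 (hbc ▸ div_pos (mul_pos hba (by linarith)) (by linarith))
  refine ⟨c, ⟨hac, hcb⟩, ?_, fun P hdeg M hM => ?_⟩
  · have hsq : 1 ≤ 2 * n ^ 2 * (y - 1) :=
      (div_le_iff₀' (by positivity)).1 (le_sub_iff_add_le'.2 hylow)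
    rw [hbc, mul_div_assoc', le_div_iff₀ (by linarith)]
    nlinarith
  · have hmap : (2 * b - a - c) / (c - a) = y := by rw [hc]; field_simp; ring
    calc P.eval b ≤ M * (Chebyshev.T ℝ n).eval ((2 * b - a - c) / (c - a)) :=
          eval_le_mul_eval_chebyshev_T hdeg hac hcb.le hM
      _ = Real.cosh 1 * M := by
          rw [hmap, hy, Chebyshev.T_real_cosh, Int.cast_natCast, mul_one_div_cancel hn0.ne',
            mul_comm]

lemma rpow_mul_sub_le_integral_of_monotoneOn {f : ℝ → ℝ} {a b c p : ℝ} (hp : 0 ≤ p)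
    (hc : c ∈ Set.Icc a b) (hf : ContinuousOn f (Set.Icc a b)) (hmono : MonotoneOn f (Set.Icc a b))
    (hfa : 0 ≤ f a) : f c ^ p * (b - c) ≤ ∫ x in a..b, |f x| ^ p := by
  have hab : a ≤ b := hc.1.trans hc.2
  have hfc : 0 ≤ f c := hfa.trans (hmono ⟨le_rfl, hab⟩ hc hc.1)
  have hint : IntervalIntegrable (fun x => |f x| ^ p) volume a b :=
    (hf.abs.rpow_const fun _ _ => Or.inr hp).intervalIntegrable_of_Icc hab
  calc f c ^ p * (b - c) = ∫ _ in c..b, f c ^ p := by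
        rw [intervalIntegral.integral_const, smul_eq_mul, mul_comm]
    _ ≤ ∫ x in c..b, |f x| ^ p := by
        refine intervalIntegral.integral_mono_on hc.2 intervalIntegrable_const
          (hint.mono_set ?_) fun x hx => ?_
        · rw [Set.uIcc_of_le hc.2, Set.uIcc_of_le hab]
          exact Set.Icc_subset_Icc_left hc.1
        · exact Real.rpow_le_rpow hfc
            ((hmono hc ⟨hc.1.trans hx.1, hx.2⟩ hx.1).trans (le_abs_self _)) hp
    _ ≤ ∫ x in a..b, |f x| ^ p :=
        intervalIntegral.integral_mono_interval hc.1 hc.2 le_rfl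
          (.of_forall fun _ => by positivity) hint

lemma monotoneOn_eval_of_derivative_nonneg {P : ℝ[X]} {a b : ℝ}
    (hP' : ∀ x ∈ Set.Icc a b, 0 ≤ (derivative P).eval x) :
    MonotoneOn (fun x => P.eval x) (Set.Icc a b) :=
  monotoneOn_of_deriv_nonneg (convex_Icc _ _) P.continuousOn P.differentiable.differentiableOn
    fun x hx => P.deriv ▸ hP' x (interior_subset hx)

lemma eval_rpow_mul_sub_le_integral {P : ℝ[X]} {n : ℕ} {a b p : ℝ} (hp : 0 ≤ p) (hab : a < b)
    (hn : 1 ≤ n) (hdeg : P.natDegree ≤ n) (hPa : 0 ≤ P.eval a)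
    (hmono : MonotoneOn (fun x => P.eval x) (Set.Icc a b)) :
    P.eval b ^ p * (b - a) ≤ 6 * Real.cosh 1 ^ p * n ^ 2 * ∫ x in a..b, |P.eval x| ^ p := by
  obtain ⟨c, ⟨hac, hcb⟩, hlen, hbound⟩ := exists_mem_Ioo_forall_eval_le_cosh_one_mul hn hab
  have hP {x : ℝ} (hx : x ∈ Set.Icc a b) : 0 ≤ P.eval x :=
    hPa.trans (hmono ⟨le_rfl, hab.le⟩ hx hx.1)
  have hPb : 0 ≤ P.eval b := hP ⟨hab.le, le_rfl⟩
  have hPc : 0 ≤ P.eval c := hP ⟨hac.le, hcb.le⟩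
  have hPbc : P.eval b ≤ Real.cosh 1 * P.eval c := by
    refine hbound P hdeg _ fun x hx => ?_
    have hxb : x ∈ Set.Icc a b := ⟨hx.1, hx.2.trans hcb.le⟩
    rw [abs_of_nonneg (hP hxb)]
    exact hmono hxb ⟨hac.le, hcb.le⟩ hx.2
  calc P.eval b ^ p * (b - a)
      ≤ (Real.cosh 1 * P.eval c) ^ p * (6 * n ^ 2 * (b - c)) := by gcongr
    _ = 6 * Real.cosh 1 ^ p * n ^ 2 * (P.eval c ^ p * (b - c)) := by
        rw [Real.mul_rpow (Real.cosh_pos 1).le hPc]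
        ring
    _ ≤ 6 * Real.cosh 1 ^ p * n ^ 2 * ∫ x in a..b, |P.eval x| ^ p := by
        gcongr
        exact rpow_mul_sub_le_integral_of_monotoneOn hp ⟨hac.le, hcb.le⟩ P.continuousOn hmono hPa

lemma log_one_add_rpow_le {n : ℕ} {s : ℝ} (hn : 2 ≤ n) (hs : 0 ≤ s) :
    Real.log (1 + (n : ℝ) ^ s) ≤ (1 + s) * Real.log n := by
  have hn2 : (2 : ℝ) ≤ n := by exact_mod_cast hn
  have hns : 1 ≤ (n : ℝ) ^ s := Real.one_le_rpow (by linarith) hs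
  rw [← Real.log_rpow (by linarith), Real.rpow_add (by linarith), Real.rpow_one]
  exact Real.log_le_log (by linarith) (by nlinarith)

/-- The constant in the first-order critical Markov–Nikolskii inequality
`‖P'‖_q ≤ markovNikolskiiConst p * log n * ‖P‖_p`, where `1 / q = 1 + 1 / p`; no attempt is made to
optimize it. -/
noncomputable def markovNikolskiiConst (p : ℝ) : ℝ :=
  (1 + 2 / p) * (2 ^ p * (1 + 6 * Real.cosh 1 ^ p)) ^ (1 / p)

lemma markovNikolskiiConst_pos {p : ℝ} (hp : 0 < p) : 0 < markovNikolskiiConst p := by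
  unfold markovNikolskiiConst
  positivity

lemma lqNorm_eval_add_const_le {P : ℝ[X]} {n : ℕ} {a b p : ℝ} (hp : 0 < p) (hab : a < b)
    (hn : 1 ≤ n) (hdeg : P.natDegree ≤ n) (hPa : 0 ≤ P.eval a)
    (hmono : MonotoneOn (fun x => P.eval x) (Set.Icc a b)) :
    LqNorm (fun x => P.eval x + P.eval b / (n : ℝ) ^ (2 / p)) p a b ≤
      (2 ^ p * (1 + 6 * Real.cosh 1 ^ p)) ^ (1 / p) * LqNorm (fun x => P.eval x) p a b := by
  have hn0 : (0 : ℝ) < n := by exact_mod_cast hn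
  have hPb : 0 ≤ P.eval b := hPa.trans (hmono ⟨le_rfl, hab.le⟩ ⟨hab.le, le_rfl⟩ hab.le)
  have hshift : |P.eval b / (n : ℝ) ^ (2 / p)| ^ p = P.eval b ^ p / n ^ 2 := by
    rw [abs_of_nonneg (by positivity), Real.div_rpow hPb (by positivity),
      ← Real.rpow_mul hn0.le, div_mul_cancel₀ _ hp.ne', Real.rpow_two]
  refine lqNorm_le_rpow_mul_of_integral_le hp.le (by positivity) hab.le ?_
  set I := ∫ x in a..b, |P.eval x| ^ p
  calc ∫ x in a..b, |P.eval x + P.eval b / (n : ℝ) ^ (2 / p)| ^ p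
      ≤ 2 ^ p * (I + P.eval b ^ p / n ^ 2 * (b - a)) := by
        rw [← hshift]
        exact integral_abs_add_const_rpow_le hp.le hab.le P.continuousOn _
    _ = 2 ^ p * (I + P.eval b ^ p * (b - a) / n ^ 2) := by ring
    _ ≤ 2 ^ p * (I + 6 * Real.cosh 1 ^ p * n ^ 2 * I / n ^ 2) := by
        gcongr 2 ^ p * (I + ?_ / n ^ 2)
        exact eval_rpow_mul_sub_le_integral hp.le hab hn hdeg hPa hmono
    _ = 2 ^ p * (1 + 6 * Real.cosh 1 ^ p) * I := by field_simp

lemma log_add_div_div_add_div_le {x y N : ℝ} (hx : 0 ≤ x) (hy : 0 < y) (hN : 0 < N) :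
    Real.log ((y + y / N) / (x + y / N)) ≤ Real.log (1 + N) := by
  refine Real.log_le_log (by positivity) ?_
  calc (y + y / N) / (x + y / N) ≤ (y + y / N) / (y / N) := by
        gcongr
        exact le_add_of_nonneg_left hx
    _ = 1 + N := by field_simp; ring

lemma lqNorm_derivative_le {P : ℝ[X]} {n : ℕ} {a b p q : ℝ} (hpq : Real.HolderTriple 1 p q)
    (hab : a < b) (hn : 2 ≤ n) (hdeg : P.natDegree ≤ n) (hPa : 0 ≤ P.eval a)
    (hP' : ∀ x ∈ Set.Icc a b, 0 ≤ (derivative P).eval x) :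
    LqNorm (fun x => (derivative P).eval x) q a b ≤
      markovNikolskiiConst p * Real.log n * LqNorm (fun x => P.eval x) p a b := by
  have hp : 0 < p := hpq.right_pos
  have hmono := monotoneOn_eval_of_derivative_nonneg hP'
  have hP {x : ℝ} (hx : x ∈ Set.Icc a b) : 0 ≤ P.eval x :=
    hPa.trans (hmono ⟨le_rfl, hab.le⟩ hx hx.1)
  rcases (hP ⟨hab.le, le_rfl⟩ : 0 ≤ P.eval b).eq_or_lt with hPb | hPb
  · have hzero : P = 0 := eq_zero_of_eval_eq_zero_on_Icc hab fun x hx =>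
      le_antisymm (hPb ▸ hmono hx ⟨hab.le, le_rfl⟩ hx.2) (hP hx)
    simp [hzero, LqNorm, hp.ne', hpq.ne_zero']
  set N := (n : ℝ) ^ (2 / p)
  have hN0 : 0 < N := Real.rpow_pos_of_pos (by exact_mod_cast (by omega : 0 < n)) _
  have hδ : 0 < P.eval b / N := div_pos hPb hN0
  have hratio : Real.log ((P.eval b + P.eval b / N) / (P.eval a + P.eval b / N)) ≤
      (1 + 2 / p) * Real.log n :=
    (log_add_div_div_add_div_le hPa hPb hN0).trans (log_one_add_rpow_le hn (by positivity))
  calc LqNorm (fun x => (derivative P).eval x) q a b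
      ≤ Real.log ((P.eval b + P.eval b / N) / (P.eval a + P.eval b / N)) *
          LqNorm (fun x => P.eval x + P.eval b / N) p a b :=
        lqNorm_deriv_le_log_mul_lqNorm hpq hab.le (fun x _ => (P.hasDerivAt x).add_const _)
          (derivative P).continuousOn (fun x hx => add_pos_of_nonneg_of_pos (hP hx) hδ) hP'
    _ ≤ (1 + 2 / p) * Real.log n * ((2 ^ p * (1 + 6 * Real.cosh 1 ^ p)) ^ (1 / p) *
          LqNorm (fun x => P.eval x) p a b) := by
        refine mul_le_mul hratio
          (lqNorm_eval_add_const_le hp hab (by omega) hdeg hPa hmono) (lqNorm_nonneg hab.le) ?_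
        have := Real.log_natCast_nonneg n
        positivity
    _ = markovNikolskiiConst p * Real.log n * LqNorm (fun x => P.eval x) p a b := by
        rw [markovNikolskiiConst]
        ring

theorem stmt1_general {p q : ℝ} {l : ℕ} (hp : 0 < p) (hl : (l : ℝ) = 1 / q - 1 / p) :
    ∃ C : ℝ, 0 < C ∧ ∀ a b : ℝ, a < b → ∀ n : ℕ, 2 ≤ n → ∀ P : ℝ[X], P.natDegree ≤ n →
      (∀ m ≤ l, ∀ x ∈ Set.Icc a b, 0 ≤ (derivative^[m] P).eval x) →
      LqNorm (fun x => (derivative^[l] P).eval x) q a b ≤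
        C * Real.log n ^ l * LqNorm (fun x => P.eval x) p a b := by
  induction l generalizing q with
  | zero =>
    have hqp : q = p := by
      have : q⁻¹ = p⁻¹ := by simpa [sub_eq_zero, eq_comm] using hl
      exact inv_injective this
    exact ⟨1, one_pos, fun a b _ n _ P _ _ => by simp [hqp]⟩
  | succ l ih =>
    set r := (p⁻¹ + l)⁻¹ with hr
    have hr0 : 0 < r := by positivity
    have hrq : Real.HolderTriple 1 r q :=
      ⟨by rw [hr, inv_inv]; push_cast at hl; simp only [one_div] at hl; linarith, one_pos, hr0⟩
    obtain ⟨C, hC, hlower⟩ := ih (q := r) (by rw [hr]; simp)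
    refine ⟨markovNikolskiiConst r * C, mul_pos (markovNikolskiiConst_pos hr0) hC,
      fun a b hab n hn P hdeg hP => ?_⟩
    have hderiv := lqNorm_derivative_le (P := derivative^[l] P) hrq hab hn
      ((natDegree_iterate_derivative P l).trans ((Nat.sub_le _ _).trans hdeg))
      (hP l l.le_succ a ⟨le_rfl, hab.le⟩)
      (by simpa only [← Function.iterate_succ_apply'] using hP (l + 1) le_rfl)
    rw [Function.iterate_succ_apply']
    calc LqNorm (fun x => (derivative (derivative^[l] P)).eval x) q a b
        ≤ markovNikolskiiConst r * Real.log n *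
            LqNorm (fun x => (derivative^[l] P).eval x) r a b := hderiv
      _ ≤ markovNikolskiiConst r * Real.log n *
            (C * Real.log n ^ l * LqNorm (fun x => P.eval x) p a b) := by
          have := Real.log_natCast_nonneg n
          have := markovNikolskiiConst_pos hr0
          gcongr
          exact hlower a b hab n hn P hdeg fun m hm => hP m (hm.trans l.le_succ)
      _ = markovNikolskiiConst r * C * Real.log n ^ (l + 1) *
            LqNorm (fun x => P.eval x) p a b := by ring

/-- Constrained Markov–Nikolskii inequality, critical case `l = 1/q - 1/p`. -/
theorem stmt1 (p q : ℝ) (hp : 0 < p) (hq : 0 < q) (k l : ℕ) (hlk : l ≤ k)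
    (hl : (l : ℝ) = 1 / q - 1 / p) :
    ∃ C : ℝ, 0 < C ∧ ∀ n : ℕ, max k 2 ≤ n → ∀ P : Polynomial ℝ, AbsMono P n k →
      LqNorm (fun x => (derivative^[l] P).eval x) q (-1) 1 ≤
        C * (Real.log n) ^ l * LqNorm (fun x => P.eval x) p (-1) 1 := by
  obtain ⟨C, hC, h⟩ := stmt1_general hp hl
  exact ⟨C, hC, fun n hn P hP => h (-1) 1 (by norm_num) n ((le_max_right k 2).trans hn) P hP.1
    fun m hm => hP.2 m (hm.trans hlk)⟩
end

section
/- For all real numbers 0 < p < ∞ and 0 < q ≤ ∞ and integers 0 ≤ l ≤ k with l > 1/q − 1/p (with the convention 1/∞ = 0), there exist a constant c = c(k, p, q) > 0 and an integer N = N(k, p, q) such that for every integer n ≥ N there exists a polynomial P ∈ Δ_n^{(k)} with ‖P‖_{L_p[−1,1]} > 0 and ‖P^{(l)}‖_{L_q[−1,1]} ≥ c · n^{2l + 2/p − 2/q} · ‖P‖_{L_p[−1,1]}. -/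
open Polynomial MeasureTheory

/-!
The extremal polynomials are spikes at the endpoint `1` of width `δ = n⁻²`, the smallest width that
degree `n` allows there. Start from a power of the nonnegative kernel `(1 + x) U_j(x)²`, which is at
most a multiple of `1 / (1 - x + δ)` on `[-1, 1]` and comparable to `1 / δ` near `1`, and integrate
`k` times from `-1`. Each integration keeps nonnegativity and lowers the order of the spike by one,
so the result `P` is `k`-absolutely monotone and `P^(l)` has size `δ^(-s - l)` on an interval of
length comparable to `δ`, for every `l ≤ k`. Once `s p ≥ 2` the tail of `P` is negligible in `L_p`,
so `‖P‖_p` is at most `δ^(1/p - s)` and `‖P^(l)‖_q` at least `δ^(1/q - s - l)`, up to constants.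
-/

/-! ### Comparison of functions and norms on an interval -/

theorem image_le_of_hasDerivAt_le {f g f' g' : ℝ → ℝ} {a b : ℝ}
    (hf : ∀ x ∈ Set.Icc a b, HasDerivAt f (f' x) x)
    (hg : ∀ x ∈ Set.Icc a b, HasDerivAt g (g' x) x) (ha : f a ≤ g a)
    (hle : ∀ x ∈ Set.Icc a b, f' x ≤ g' x) : ∀ x ∈ Set.Icc a b, f x ≤ g x :=
  image_le_of_deriv_right_le_deriv_boundary
    (fun x hx => (hf x hx).continuousAt.continuousWithinAt)
    (fun x hx => (hf x (Set.Ico_subset_Icc_self hx)).hasDerivWithinAt) ha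
    (fun x hx => (hg x hx).continuousAt.continuousWithinAt)
    (fun x hx => (hg x (Set.Ico_subset_Icc_self hx)).hasDerivWithinAt)
    fun x hx => hle x (Set.Ico_subset_Icc_self hx)

theorem hasDerivAt_div_sub_add_pow {δ x : ℝ} (c : ℝ) (s : ℕ) (hx : 1 - x + δ ≠ 0) :
    HasDerivAt (fun y => c / (1 - y + δ) ^ s) (c * s / (1 - x + δ) ^ (s + 1)) x := by
  have hbase : HasDerivAt (fun y : ℝ => 1 - y + δ) (-1) x :=
    ((hasDerivAt_id x).const_sub 1).add_const δ
  have hquot := (hasDerivAt_const x c).div (hbase.pow s) (pow_ne_zero s hx)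
  refine hquot.congr_deriv ?_
  rcases s with _ | s
  · simp
  · simp only [Pi.pow_apply, Nat.add_sub_cancel]
    field_simp
    ring

theorem intervalIntegrable_abs_rpow {f : ℝ → ℝ} {a b q : ℝ} (hf : ContinuousOn f (Set.uIcc a b))
    (hq : 0 ≤ q) : IntervalIntegrable (fun x => |f x| ^ q) volume a b :=
  (hf.abs.rpow_const fun _ _ => Or.inr hq).intervalIntegrable

theorem mul_rpow_le_LqNorm {f : ℝ → ℝ} {a b q L h : ℝ} (hf : ContinuousOn f (Set.Icc a b))
    (hq : 0 < q) (hL : 0 ≤ L) (hh : 0 ≤ h) (hhab : h ≤ b - a)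
    (hLf : ∀ x ∈ Set.Icc (b - h) b, L ≤ |f x|) : L * h ^ (1 / q) ≤ LqNorm f q a b := by
  have hab : a ≤ b := by linarith
  have hint : IntervalIntegrable (fun x => |f x| ^ q) volume a b :=
    intervalIntegrable_abs_rpow (by rwa [Set.uIcc_of_le hab]) hq.le
  have hint' : IntervalIntegrable (fun x => |f x| ^ q) volume (b - h) b :=
    hint.mono_set (by
      rw [Set.uIcc_of_le hab, Set.uIcc_of_le (by linarith)]
      exact Set.Icc_subset_Icc_left (by linarith))
  have hI : L ^ q * h ≤ ∫ x in a..b, |f x| ^ q := by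
    calc L ^ q * h = ∫ _ in (b - h)..b, L ^ q := by
          rw [intervalIntegral.integral_const, smul_eq_mul]
          ring
      _ ≤ ∫ x in (b - h)..b, |f x| ^ q :=
          intervalIntegral.integral_mono_on (by linarith) (by simp) hint' fun x hx =>
            Real.rpow_le_rpow hL (hLf x hx) hq.le
      _ ≤ ∫ x in a..b, |f x| ^ q :=
          intervalIntegral.integral_mono_interval (by linarith) (by linarith) le_rfl
            (ae_of_all _ fun x => by positivity) hint
  calc L * h ^ (1 / q) = (L ^ q * h) ^ (1 / q) := by
        rw [Real.mul_rpow (by positivity) hh, ← Real.rpow_mul hL, mul_one_div_cancel hq.ne',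
          Real.rpow_one]
    _ ≤ LqNorm f q a b := Real.rpow_le_rpow (by positivity) hI (by positivity)

theorem abs_le_LinfNorm {f : ℝ → ℝ} {a b x : ℝ} (hf : ContinuousOn f (Set.Icc a b))
    (hx : x ∈ Set.Icc a b) : |f x| ≤ LinfNorm f a b :=
  le_csSup (isCompact_Icc.image_of_continuousOn hf.abs).bddAbove (Set.mem_image_of_mem _ hx)

theorem mul_rpow_le_Lnorm {f : ℝ → ℝ} {a b L h : ℝ} {q : ENNReal}
    (hf : ContinuousOn f (Set.Icc a b)) (hq : 0 < q) (hL : 0 ≤ L) (hh : 0 ≤ h) (hhab : h ≤ b - a)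
    (hLf : ∀ x ∈ Set.Icc (b - h) b, L ≤ |f x|) : L * h ^ (1 / q.toReal) ≤ Lnorm f q a b := by
  unfold Lnorm
  split_ifs with hq_top
  · calc L * h ^ (1 / q.toReal) = L := by simp [hq_top]
      _ ≤ |f b| := hLf b (Set.right_mem_Icc.mpr (by linarith))
      _ ≤ LinfNorm f a b := abs_le_LinfNorm hf (Set.right_mem_Icc.mpr (by linarith))
  · exact mul_rpow_le_LqNorm hf (ENNReal.toReal_pos hq.ne' hq_top) hL hh hhab hLf

theorem integral_sub_add_rpow_neg_le {a b δ r : ℝ} (hab : a ≤ b) (hδ : 0 < δ) (hr : 1 < r) :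
    ∫ x in a..b, (b - x + δ) ^ (-r) ≤ δ ^ (1 - r) / (r - 1) := by
  have hsubst : ∫ x in a..b, (b - x + δ) ^ (-r) = ∫ y in δ..(b - a + δ), y ^ (-r) := by
    simpa [sub_add_eq_add_sub] using
      intervalIntegral.integral_comp_sub_left (a := a) (b := b) (fun y : ℝ => y ^ (-r)) (b + δ)
  have hzero : (0 : ℝ) ∉ Set.uIcc δ (b - a + δ) := by
    rw [Set.uIcc_of_le (by linarith)]
    exact fun h => hδ.not_ge h.1
  have hnonneg : 0 ≤ (b - a + δ) ^ (1 - r) := Real.rpow_nonneg (by linarith) _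
  rw [hsubst, integral_rpow (Or.inr ⟨by linarith, hzero⟩), neg_add_eq_sub, ← neg_div_neg_eq,
    neg_sub, neg_sub]
  gcongr
  linarith

/-! ### Peaks at the endpoint `1` -/

/-- `f` is a peak of order `s` and width `δ` at the endpoint `1` of `[-1, 1]`: it is nonnegative,
bounded by a multiple of `(1 - x + δ)⁻ˢ`, and at least a multiple of `δ⁻ˢ` on an interval
`[1 - δ/K, 1]`. One constant `K ≥ 1` controls all three multiples, so that a family of peaks is
uniform exactly when `K` does not depend on the member. -/
structure EndpointPeak (f : ℝ → ℝ) (δ : ℝ) (s : ℕ) (K : ℝ) : Prop where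
  continuousOn : ContinuousOn f (Set.Icc (-1) 1)
  width_pos : 0 < δ
  width_le_one : δ ≤ 1
  one_le_const : 1 ≤ K
  nonneg : ∀ x ∈ Set.Icc (-1) 1, 0 ≤ f x
  le_div : ∀ x ∈ Set.Icc (-1) 1, f x ≤ K / (1 - x + δ) ^ s
  inv_le : ∀ x ∈ Set.Icc (1 - δ / K) 1, (K * δ ^ s)⁻¹ ≤ f x

namespace EndpointPeak

variable {f F g : ℝ → ℝ} {δ δ' K K' p : ℝ} {s l : ℕ} {q : ENNReal}

theorem const_pos (h : EndpointPeak f δ s K) : 0 < K :=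
  zero_lt_one.trans_le h.one_le_const

theorem width_div_const_le_one (h : EndpointPeak f δ s K) : δ / K ≤ 1 :=
  div_le_one_of_le₀ (h.width_le_one.trans h.one_le_const) h.const_pos.le

theorem Icc_subset (h : EndpointPeak f δ s K) : Set.Icc (1 - δ / K) 1 ⊆ Set.Icc (-1) 1 :=
  Set.Icc_subset_Icc_left (by linarith [h.width_div_const_le_one])

theorem sub_add_width_pos (h : EndpointPeak f δ s K) {x : ℝ} (hx : x ≤ 1) : 0 < 1 - x + δ := by
  linarith [h.width_pos]

theorem mono (h : EndpointPeak f δ s K) (hδ' : 0 < δ') (hδδ' : δ' ≤ δ) (hKK' : K ≤ K')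
    (hscale : K * δ ^ s ≤ K' * δ' ^ s) : EndpointPeak f δ' s K' where
  continuousOn := h.continuousOn
  width_pos := hδ'
  width_le_one := hδδ'.trans h.width_le_one
  one_le_const := h.one_le_const.trans hKK'
  nonneg := h.nonneg
  le_div x hx := by
    have hK' : 0 ≤ K' := h.const_pos.le.trans hKK'
    have hx1 : 0 ≤ 1 - x := sub_nonneg.mpr hx.2
    exact (h.le_div x hx).trans (by gcongr)
  inv_le x hx := by
    have hK := h.const_pos
    have hδ := h.width_pos
    have hwidth : δ' / K' ≤ δ / K := by gcongr
    calc (K' * δ' ^ s)⁻¹ ≤ (K * δ ^ s)⁻¹ := by gcongr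
      _ ≤ f x := h.inv_le x ⟨by linarith [hx.1], hx.2⟩

theorem mono_const (h : EndpointPeak f δ s K) (hKK' : K ≤ K') : EndpointPeak f δ s K' :=
  h.mono h.width_pos le_rfl hKK' (by have := h.width_pos; gcongr)

theorem pow (h : EndpointPeak f δ s K) {m : ℕ} (hm : m ≠ 0) :
    EndpointPeak (fun x => f x ^ m) δ (s * m) (K ^ m) where
  continuousOn := h.continuousOn.pow m
  width_pos := h.width_pos
  width_le_one := h.width_le_one
  one_le_const := one_le_pow₀ h.one_le_const
  nonneg x hx := pow_nonneg (h.nonneg x hx) m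
  le_div x hx := by
    rw [pow_mul, ← div_pow]
    exact pow_le_pow_left₀ (h.nonneg x hx) (h.le_div x hx) m
  inv_le x hx := by
    have hK := h.const_pos
    have hδ := h.width_pos
    have hwidth : δ / K ^ m ≤ δ / K := by
      gcongr
      exact le_self_pow₀ h.one_le_const hm
    rw [pow_mul, ← mul_pow, ← inv_pow]
    exact pow_le_pow_left₀ (by positivity) (h.inv_le x ⟨by linarith [hx.1], hx.2⟩) m

theorem antideriv_nonneg (h : EndpointPeak f δ s K)
    (hF : ∀ x ∈ Set.Icc (-1) 1, HasDerivAt F (f x) x) (hF0 : F (-1) = 0) :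
    ∀ x ∈ Set.Icc (-1) 1, 0 ≤ F x :=
  image_le_of_hasDerivAt_le (fun x _ => hasDerivAt_const x 0) hF hF0.ge h.nonneg

theorem antideriv_le_div (h : EndpointPeak f δ (s + 1) K) (hs : 1 ≤ s)
    (hF : ∀ x ∈ Set.Icc (-1) 1, HasDerivAt F (f x) x) (hF0 : F (-1) = 0) :
    ∀ x ∈ Set.Icc (-1) 1, F x ≤ K / (1 - x + δ) ^ s := by
  have hK := h.const_pos
  refine image_le_of_hasDerivAt_le hF
    (fun x hx => hasDerivAt_div_sub_add_pow K s (h.sub_add_width_pos hx.2).ne') ?_ fun x hx => ?_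
  · have := h.sub_add_width_pos (x := -1) (by norm_num)
    rw [hF0]
    positivity
  · have := h.sub_add_width_pos hx.2
    have hs' : (1 : ℝ) ≤ s := mod_cast hs
    refine (h.le_div x hx).trans ?_
    gcongr
    exact le_mul_of_one_le_right hK.le hs'

theorem inv_le_antideriv (h : EndpointPeak f δ (s + 1) K)
    (hF : ∀ x ∈ Set.Icc (-1) 1, HasDerivAt F (f x) x) (hF0 : F (-1) = 0) :
    ∀ x ∈ Set.Icc (1 - δ / (2 * K)) 1, (2 * K ^ 2 * δ ^ s)⁻¹ ≤ F x := by
  intro x hx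
  have hK := h.const_pos
  have hδ := h.width_pos
  have hhalf : δ / K = 2 * (δ / (2 * K)) := by field_simp
  have hhalf_pos : 0 < δ / (2 * K) := by positivity
  have hstart : 0 ≤ F (1 - δ / K) :=
    h.antideriv_nonneg hF hF0 _ (h.Icc_subset (Set.left_mem_Icc.mpr (by linarith)))
  have hlinear : (K * δ ^ (s + 1))⁻¹ * (x - (1 - δ / K)) ≤ F x :=
    image_le_of_hasDerivAt_le (f' := fun _ => (K * δ ^ (s + 1))⁻¹)
      (f := fun y => (K * δ ^ (s + 1))⁻¹ * (y - (1 - δ / K)))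
      (fun y _ => by
        simpa using ((hasDerivAt_id y).sub_const (1 - δ / K)).const_mul (K * δ ^ (s + 1))⁻¹)
      (fun y hy => hF y (h.Icc_subset hy)) (by simpa using hstart) h.inv_le x
      ⟨by linarith [hx.1], hx.2⟩
  calc (2 * K ^ 2 * δ ^ s)⁻¹ = (K * δ ^ (s + 1))⁻¹ * (δ / (2 * K)) := by
        field_simp
        ring
    _ ≤ (K * δ ^ (s + 1))⁻¹ * (x - (1 - δ / K)) := by
        gcongr
        linarith [hx.1]
    _ ≤ F x := hlinear

theorem antideriv (h : EndpointPeak f δ (s + 1) K) (hs : 1 ≤ s)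
    (hF : ∀ x ∈ Set.Icc (-1) 1, HasDerivAt F (f x) x) (hF0 : F (-1) = 0) :
    EndpointPeak F δ s (2 * K ^ 2) := by
  have hK := h.one_le_const
  have hδ := h.width_pos
  refine
    { continuousOn := fun x hx => (hF x hx).continuousAt.continuousWithinAt
      width_pos := hδ
      width_le_one := h.width_le_one
      one_le_const := by nlinarith
      nonneg := h.antideriv_nonneg hF hF0
      le_div := fun x hx => (h.antideriv_le_div hs hF hF0 x hx).trans ?_
      inv_le := fun x hx => h.inv_le_antideriv hF hF0 x ⟨le_trans ?_ hx.1, hx.2⟩ }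
  · have : 0 ≤ 1 - x := sub_nonneg.mpr hx.2
    gcongr
    nlinarith
  · gcongr
    exact le_self_pow₀ hK two_ne_zero

theorem abs_rpow_le (h : EndpointPeak f δ s K) (hp : 0 ≤ p) {x : ℝ} (hx : x ∈ Set.Icc (-1) 1) :
    |f x| ^ p ≤ K ^ p * (1 - x + δ) ^ (-(s * p)) := by
  have hw := h.sub_add_width_pos hx.2
  calc |f x| ^ p ≤ (K / (1 - x + δ) ^ s) ^ p := by
        rw [abs_of_nonneg (h.nonneg x hx)]
        exact Real.rpow_le_rpow (h.nonneg x hx) (h.le_div x hx) hp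
    _ = K ^ p * (1 - x + δ) ^ (-(s * p)) := by
        rw [Real.div_rpow h.const_pos.le (by positivity), ← Real.rpow_natCast,
          ← Real.rpow_mul hw.le, Real.rpow_neg hw.le, div_eq_mul_inv]

theorem LqNorm_le (h : EndpointPeak f δ s K) (hp : 0 < p) (hs : 2 ≤ s * p) :
    LqNorm f p (-1) 1 ≤ K * δ ^ (1 / p - s) := by
  have hδ := h.width_pos
  have hK := h.const_pos
  have hint_f : IntervalIntegrable (fun x => |f x| ^ p) volume (-1) 1 :=
    intervalIntegrable_abs_rpow (by rw [Set.uIcc_of_le (by norm_num)]; exact h.continuousOn) hp.le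
  have hint_bound : IntervalIntegrable (fun x => K ^ p * (1 - x + δ) ^ (-(s * p))) volume (-1) 1 :=
    ContinuousOn.intervalIntegrable_of_Icc (by norm_num) <| continuousOn_const.mul <|
      ContinuousOn.rpow_const (by fun_prop) fun x hx =>
        Or.inl (h.sub_add_width_pos hx.2).ne'
  have hint_le : ∫ x in (-1 : ℝ)..1, |f x| ^ p ≤ K ^ p * δ ^ (1 - s * p) := by
    calc ∫ x in (-1 : ℝ)..1, |f x| ^ p
        ≤ ∫ x in (-1 : ℝ)..1, K ^ p * (1 - x + δ) ^ (-(s * p)) :=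
          intervalIntegral.integral_mono_on (by norm_num) hint_f hint_bound fun _ =>
            h.abs_rpow_le hp.le
      _ ≤ K ^ p * (δ ^ (1 - s * p) / (s * p - 1)) := by
          rw [intervalIntegral.integral_const_mul]
          gcongr
          exact integral_sub_add_rpow_neg_le (by norm_num) hδ (by linarith)
      _ ≤ K ^ p * δ ^ (1 - s * p) := by
          gcongr
          exact div_le_self (by positivity) (by linarith)
  calc LqNorm f p (-1) 1 ≤ (K ^ p * δ ^ (1 - s * p)) ^ (1 / p) :=
        Real.rpow_le_rpow (intervalIntegral.integral_nonneg (by norm_num) fun x _ => by positivity)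
          hint_le (by positivity)
    _ = K * δ ^ (1 / p - s) := by
        rw [Real.mul_rpow (by positivity) (by positivity), ← Real.rpow_mul hK.le,
          ← Real.rpow_mul hδ.le, mul_one_div_cancel hp.ne', Real.rpow_one]
        congr 2
        field_simp

theorem LqNorm_pos (h : EndpointPeak f δ s K) (hp : 0 < p) : 0 < LqNorm f p (-1) 1 := by
  have hδ := h.width_pos
  have hK := h.const_pos
  calc 0 < (K * δ ^ s)⁻¹ * (δ / K) ^ (1 / p) := by positivity
    _ ≤ LqNorm f p (-1) 1 :=
        mul_rpow_le_LqNorm h.continuousOn hp (by positivity) (by positivity)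
          (by linarith [h.width_div_const_le_one]) fun x hx => (h.inv_le x hx).trans (le_abs_self _)

theorem le_Lnorm (h : EndpointPeak f δ s K) (hq : 0 < q) :
    (K * δ ^ s)⁻¹ * (δ / K) ^ (1 / q.toReal) ≤ Lnorm f q (-1) 1 := by
  have hδ := h.width_pos
  have hK := h.const_pos
  exact mul_rpow_le_Lnorm h.continuousOn hq (by positivity) (by positivity)
    (by linarith [h.width_div_const_le_one]) fun x hx => (h.inv_le x hx).trans (le_abs_self _)

theorem mul_LqNorm_le_Lnorm (hf : EndpointPeak f δ s K) (hg : EndpointPeak g δ (s + l) K)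
    (hp : 0 < p) (hs : 2 ≤ s * p) (hq : 0 < q) :
    (K ^ (2 + 1 / q.toReal))⁻¹ * δ ^ (1 / q.toReal - 1 / p - l) * LqNorm f p (-1) 1 ≤
      Lnorm g q (-1) 1 := by
  have hδ := hf.width_pos
  have hK := hf.const_pos
  set r := 1 / q.toReal
  calc (K ^ (2 + r))⁻¹ * δ ^ (r - 1 / p - l) * LqNorm f p (-1) 1
      ≤ (K ^ (2 + r))⁻¹ * δ ^ (r - 1 / p - l) * (K * δ ^ (1 / p - s)) := by
        gcongr
        exact hf.LqNorm_le hp hs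
    _ = K * (K ^ (2 + r))⁻¹ * (δ ^ (r - 1 / p - l) * δ ^ (1 / p - s)) := by ring
    _ = K * (K ^ (2 + r))⁻¹ * δ ^ (r - (s + l : ℕ)) := by
        rw [← Real.rpow_add hδ]
        congr 2
        push_cast
        ring
    _ = (K * δ ^ (s + l))⁻¹ * (δ / K) ^ r := by
        rw [Real.rpow_sub hδ, Real.rpow_natCast, Real.div_rpow hδ.le hK.le, Real.rpow_add hK,
          Real.rpow_two]
        field_simp
    _ ≤ Lnorm g q (-1) 1 := hg.le_Lnorm hq

end EndpointPeak

theorem exists_derivative_eq_and_eval_eq_zero {R : Type*} [Field R] [CharZero R] (Q : R[X])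
    (a : R) : ∃ P : R[X], derivative P = Q ∧ P.eval a = 0 := by
  induction Q using Polynomial.induction_on' with
  | add Q₁ Q₂ h₁ h₂ =>
    obtain ⟨P₁, rfl, hP₁⟩ := h₁
    obtain ⟨P₂, rfl, hP₂⟩ := h₂
    exact ⟨P₁ + P₂, derivative_add, by simp [hP₁, hP₂]⟩
  | monomial i c =>
    refine ⟨monomial (i + 1) (c / (i + 1)) - C (c / (i + 1) * a ^ (i + 1)), ?_, by simp⟩
    rw [derivative_sub, derivative_C, sub_zero, derivative_monomial_succ,
      div_mul_cancel₀ _ (Nat.cast_add_one_ne_zero i)]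

theorem EndpointPeak.exists_iterated_antideriv (k : ℕ) {s : ℕ} (hs : 1 ≤ s) {δ K : ℝ} {Q : ℝ[X]}
    (hQ : EndpointPeak (fun x => Q.eval x) δ (s + k) K) :
    ∃ P : ℝ[X], P.natDegree ≤ Q.natDegree + k ∧ ∀ j ≤ k,
      EndpointPeak (fun x => (derivative^[j] P).eval x) δ (s + j) ((fun c => 2 * c ^ 2)^[k] K) := by
  induction k generalizing s with
  | zero =>
    refine ⟨Q, le_rfl, fun j hj => ?_⟩
    obtain rfl : j = 0 := Nat.le_zero.mp hj
    exact hQ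
  | succ k ih =>
    obtain ⟨P', hdeg, hP'⟩ := ih (s := s + 1) (by omega) (by rwa [add_right_comm, add_assoc])
    obtain ⟨P, rfl, hP0⟩ := exists_derivative_eq_and_eval_eq_zero P' (-1)
    rw [natDegree_derivative] at hdeg
    rw [Function.iterate_succ_apply']
    refine ⟨P, by omega, fun j hj => ?_⟩
    cases j with
    | zero => exact (hP' 0 k.zero_le).antideriv hs (fun x _ => P.hasDerivAt x) hP0
    | succ j =>
      have hj_peak := hP' j (by omega)
      rw [add_right_comm, add_assoc] at hj_peak
      exact hj_peak.mono_const (by nlinarith [hj_peak.one_le_const])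

/-! ### The Chebyshev kernel -/

theorem natCast_add_one_mul_iterate_derivative_U {R : Type*} [CommRing R] (j k : ℕ) :
    ((j : R[X]) + 1) * derivative^[k] (Chebyshev.U R j) =
      derivative^[k + 1] (Chebyshev.T R (j + 1)) := by
  have hT : derivative (Chebyshev.T R (j + 1)) = ((j + 1 : ℕ) : R[X]) * Chebyshev.U R j := by
    simpa using Chebyshev.T_derivative_eq_U (R := R) (j + 1)
  rw [Function.iterate_succ_apply, hT, iterate_derivative_natCast_mul, Nat.cast_succ]

theorem abs_iterate_derivative_U_real_le (j k : ℕ) {x : ℝ} (hx : |x| ≤ 1) :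
    |(derivative^[k] (Chebyshev.U ℝ j)).eval x| ≤ (derivative^[k] (Chebyshev.U ℝ j)).eval 1 := by
  have hj : (0 : ℝ) < j + 1 := by positivity
  have hT := Chebyshev.abs_iterate_derivative_T_real_le (j + 1) (k + 1) hx
  rw [← natCast_add_one_mul_iterate_derivative_U] at hT
  simp only [eval_mul, eval_add, eval_natCast, eval_one, abs_mul, abs_of_pos hj] at hT
  exact le_of_mul_le_mul_left hT hj

theorem eval_U_sq_le (j : ℕ) {x : ℝ} (hx : |x| ≤ 1) :
    (Chebyshev.U ℝ j).eval x ^ 2 ≤ ((j : ℝ) + 1) ^ 2 := by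
  have hU := abs_iterate_derivative_U_real_le j 0 hx
  rw [Function.iterate_zero_apply, Chebyshev.U_eval_one] at hU
  exact sq_le_sq' (abs_le.mp hU).1 (abs_le.mp hU).2

theorem one_sub_sq_mul_eval_U_sq_le_one (j : ℤ) {x : ℝ} (hx : x ∈ Set.Icc (-1) 1) :
    (1 - x ^ 2) * (Chebyshev.U ℝ j).eval x ^ 2 ≤ 1 := by
  obtain ⟨θ, rfl⟩ : ∃ θ, Real.cos θ = x := ⟨_, Real.cos_arccos hx.1 hx.2⟩
  calc (1 - Real.cos θ ^ 2) * (Chebyshev.U ℝ j).eval (Real.cos θ) ^ 2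
      = ((Chebyshev.U ℝ j).eval (Real.cos θ) * Real.sin θ) ^ 2 := by rw [← Real.sin_sq]; ring
    _ = Real.sin ((j + 1) * θ) ^ 2 := by rw [Chebyshev.U_real_cos]
    _ ≤ 1 := Real.sin_sq_le_one _

theorem half_le_eval_U (j : ℕ) {x : ℝ} (hx : x ∈ Set.Icc 0 1)
    (hx_near : (1 - x) * ((j : ℝ) + 1) ^ 2 ≤ 1) :
    ((j : ℝ) + 1) / 2 ≤ (Chebyshev.U ℝ j).eval x := by
  have hderiv_one : 3 * (derivative (Chebyshev.U ℝ j)).eval 1 ≤ ((j : ℝ) + 1) ^ 3 := by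
    rw [Chebyshev.derivative_U_eval_one]
    push_cast
    nlinarith [(Nat.cast_nonneg j : (0 : ℝ) ≤ j)]
  have hderiv : ∀ y ∈ interior (Set.Icc (0 : ℝ) 1),
      deriv (fun y => (Chebyshev.U ℝ j).eval y) y ≤ ((j : ℝ) + 1) ^ 3 / 3 := by
    intro y hy
    have hy' := interior_subset hy
    have := abs_iterate_derivative_U_real_le j 1 (abs_le.mpr ⟨by linarith [hy'.1], hy'.2⟩)
    rw [Polynomial.deriv]
    calc (derivative (Chebyshev.U ℝ j)).eval y ≤ (derivative (Chebyshev.U ℝ j)).eval 1 :=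
          (le_abs_self _).trans this
      _ ≤ ((j : ℝ) + 1) ^ 3 / 3 := by linarith
  have hmvt := (convex_Icc (0 : ℝ) 1).image_sub_le_mul_sub_of_deriv_le
    (Chebyshev.U ℝ j).continuousOn (Chebyshev.U ℝ j).differentiable.differentiableOn hderiv
    x hx 1 (Set.right_mem_Icc.mpr zero_le_one) hx.2
  simp only [Chebyshev.U_eval_one, Int.cast_natCast] at hmvt
  have hprod : ((j : ℝ) + 1) * ((1 - x) * ((j : ℝ) + 1) ^ 2) ≤ j + 1 :=
    mul_le_of_le_one_right (by positivity) hx_near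
  linarith

/-- With `x = cos θ` and `m = j + 1`, this is `sin² (m θ) / (1 - cos θ)`, that is, `m` times the
Fejér kernel `sin² (m θ) / (2 m sin² (θ / 2))`; it is the basic nonnegative polynomial concentrated
at `x = 1`. -/
noncomputable def fejerKernel (j : ℕ) : ℝ[X] :=
  (1 + X) * Chebyshev.U ℝ j ^ 2

theorem eval_fejerKernel (j : ℕ) (x : ℝ) :
    (fejerKernel j).eval x = (1 + x) * (Chebyshev.U ℝ j).eval x ^ 2 := by
  simp [fejerKernel]

theorem natDegree_fejerKernel_le (j : ℕ) : (fejerKernel j).natDegree ≤ 2 * j + 1 := by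
  rw [add_comm]
  refine natDegree_mul_le_of_le ?_ (natDegree_pow_le_of_le 2 (Chebyshev.natDegree_U_natCast ℝ j).le)
  exact natDegree_add_le_of_degree_le (by simp) natDegree_X_le

theorem endpointPeak_fejerKernel (j : ℕ) :
    EndpointPeak (fun x => (fejerKernel j).eval x) (((j : ℝ) + 1) ^ 2)⁻¹ 1 4 := by
  have hm : (1 : ℝ) ≤ ((j : ℝ) + 1) ^ 2 := one_le_pow₀ (by simp)
  have hm_pos : (0 : ℝ) < ((j : ℝ) + 1) ^ 2 := by positivity
  have hδ_le : (((j : ℝ) + 1) ^ 2)⁻¹ ≤ 1 := inv_le_one_of_one_le₀ hm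
  refine ⟨(fejerKernel j).continuousOn, by positivity, hδ_le, by norm_num, fun x hx => ?_,
    fun x hx => ?_, fun x hx => ?_⟩
  · rw [eval_fejerKernel]
    have : 0 ≤ 1 + x := by linarith [hx.1]
    positivity
  · have hw : 0 < 1 - x + (((j : ℝ) + 1) ^ 2)⁻¹ := by linarith [hx.2, inv_pos.mpr hm_pos]
    have hdecay := one_sub_sq_mul_eval_U_sq_le_one j hx
    have hbound : (1 + x) * (Chebyshev.U ℝ j).eval x ^ 2 * (((j : ℝ) + 1) ^ 2)⁻¹ ≤ 2 := by
      rw [← div_eq_mul_inv, div_le_iff₀ hm_pos]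
      exact mul_le_mul (by linarith [hx.2]) (eval_U_sq_le j (abs_le.mpr hx)) (by positivity)
        (by norm_num)
    rw [eval_fejerKernel, pow_one, le_div_iff₀ hw]
    linarith
  · have hx_near : 4 * ((1 - x) * ((j : ℝ) + 1) ^ 2) ≤ 1 := by
      have hx1 : 4 * (1 - x) ≤ (((j : ℝ) + 1) ^ 2)⁻¹ := by linarith [hx.1]
      calc 4 * ((1 - x) * ((j : ℝ) + 1) ^ 2) = 4 * (1 - x) * ((j : ℝ) + 1) ^ 2 := by ring
        _ ≤ (((j : ℝ) + 1) ^ 2)⁻¹ * ((j : ℝ) + 1) ^ 2 := by gcongr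
        _ = 1 := inv_mul_cancel₀ hm_pos.ne'
    have hx0 : 0 ≤ x := by linarith [hx.1]
    have hU := half_le_eval_U j ⟨hx0, hx.2⟩ (by linarith)
    calc (4 * ((((j : ℝ) + 1) ^ 2)⁻¹) ^ 1)⁻¹ = 1 * (((j : ℝ) + 1) / 2) ^ 2 := by
          field_simp
          norm_num
      _ ≤ (1 + x) * (Chebyshev.U ℝ j).eval x ^ 2 := by
          gcongr
          linarith
      _ = (fejerKernel j).eval x := (eval_fejerKernel j x).symm

theorem exists_endpointPeak_natDegree_add_le {M : ℕ} (hM : 1 ≤ M) :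
    ∃ K : ℝ, ∀ n : ℕ, 2 * M ≤ n → ∃ Q : ℝ[X], Q.natDegree + M ≤ n ∧
      EndpointPeak (fun x => Q.eval x) ((n : ℝ) ^ 2)⁻¹ M K := by
  refine ⟨4 ^ M * ((4 * M) ^ 2) ^ M, fun n hn => ?_⟩
  obtain ⟨j, hj⟩ : ∃ j, n / (2 * M) = j + 1 :=
    Nat.exists_eq_add_of_le' ((Nat.one_le_div_iff (by omega)).mpr hn)
  have hjn : 2 * M * (j + 1) ≤ n := hj ▸ Nat.mul_div_le n (2 * M)
  have hnj : n ≤ 4 * M * (j + 1) := by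
    have : n < 2 * M * (j + 1 + 1) := hj ▸ Nat.lt_mul_div_succ n (by omega)
    nlinarith
  have hjn' : (j : ℝ) + 1 ≤ n := by
    exact_mod_cast (Nat.le_mul_of_pos_left (j + 1) (by omega)).trans hjn
  have hnj' : (n : ℝ) ≤ 4 * M * (j + 1) := mod_cast hnj
  have hn_pos : (0 : ℝ) < n := lt_of_lt_of_le (by positivity) hjn'
  refine ⟨fejerKernel j ^ M, ?_, ?_⟩
  · have := natDegree_pow_le_of_le M (natDegree_fejerKernel_le j)
    nlinarith
  · have hpeak := (endpointPeak_fejerKernel j).pow (m := M) (by omega)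
    simp only [← eval_pow, one_mul] at hpeak
    have hscale : (((j : ℝ) + 1) ^ 2)⁻¹ ≤ (4 * M) ^ 2 * ((n : ℝ) ^ 2)⁻¹ := by
      rw [← div_eq_mul_inv, le_div_iff₀ (by positivity), inv_mul_le_iff₀ (by positivity),
        ← mul_pow]
      exact pow_le_pow_left₀ hn_pos.le (by linarith) 2
    have hM' : (1 : ℝ) ≤ M := mod_cast hM
    refine hpeak.mono (by positivity) (by gcongr) ?_ ?_
    · exact le_mul_of_one_le_right (by positivity) (one_le_pow₀ (one_le_pow₀ (by linarith)))
    · rw [mul_assoc, ← mul_pow ((4 * (M : ℝ)) ^ 2)]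
      gcongr

theorem exists_absMono_endpointPeak (k : ℕ) {s : ℕ} (hs : 1 ≤ s) :
    ∃ K : ℝ, ∃ N : ℕ, ∀ n : ℕ, N ≤ n → ∃ P : ℝ[X], AbsMono P n k ∧ ∀ j ≤ k,
      EndpointPeak (fun x => (derivative^[j] P).eval x) ((n : ℝ) ^ 2)⁻¹ (s + j) K := by
  obtain ⟨K, hK⟩ := exists_endpointPeak_natDegree_add_le (M := s + k) (by omega)
  refine ⟨(fun c => 2 * c ^ 2)^[k] K, 2 * (s + k), fun n hn => ?_⟩
  obtain ⟨Q, hdeg, hQ⟩ := hK n hn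
  obtain ⟨P, hdegP, hP⟩ := hQ.exists_iterated_antideriv k hs
  exact ⟨P, ⟨by omega, fun j hj => (hP j hj).nonneg⟩, hP⟩

theorem stmt7_general (p : ℝ) (hp : 0 < p) (q : ENNReal) (hq : 0 < q) (k : ℕ) :
    ∃ c : ℝ, 0 < c ∧ ∃ N : ℕ, ∀ n : ℕ, N ≤ n → ∃ P : ℝ[X], AbsMono P n k ∧
      0 < LqNorm (fun x => P.eval x) p (-1) 1 ∧ ∀ l ≤ k,
        c * (n : ℝ) ^ (2 * (l : ℝ) + 2 / p - 2 / q.toReal) *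
            LqNorm (fun x => P.eval x) p (-1) 1 ≤
          Lnorm (fun x => (derivative^[l] P).eval x) q (-1) 1 := by
  obtain ⟨s, hs⟩ := exists_nat_ge (2 / p)
  have hs_one : 1 ≤ s := Nat.one_le_iff_ne_zero.mpr fun h => by
    have : 0 < 2 / p := by positivity
    simp only [h, Nat.cast_zero] at hs
    linarith
  obtain ⟨K, N, H⟩ := exists_absMono_endpointPeak k hs_one
  have hK : 0 < K :=
    let ⟨_, _, hP⟩ := H N le_rfl
    (hP 0 k.zero_le).const_pos
  refine ⟨(K ^ (2 + 1 / q.toReal))⁻¹, by positivity, N, fun n hn => ?_⟩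
  obtain ⟨P, hmono, hP⟩ := H n hn
  have hP0 : EndpointPeak (fun x => P.eval x) ((n : ℝ) ^ 2)⁻¹ s K := hP 0 k.zero_le
  refine ⟨P, hmono, hP0.LqNorm_pos hp, fun l hl => ?_⟩
  have hexp : (n : ℝ) ^ (2 * (l : ℝ) + 2 / p - 2 / q.toReal) =
      ((n : ℝ) ^ 2)⁻¹ ^ (1 / q.toReal - 1 / p - l) := by
    rw [Real.inv_rpow (by positivity), ← Real.rpow_neg (by positivity), ← Real.rpow_natCast_mul
      (by positivity)]
    congr 1
    push_cast
    ring
  rw [hexp]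
  exact hP0.mul_LqNorm_le_Lnorm (hP l hl) hp ((div_le_iff₀ hp).mp hs) hq

/-- Lower bound in the case `l > 1/q - 1/p` (here `0 < q ≤ ∞`,
with the convention `1/∞ = 0`). -/
theorem stmt7 (p : ℝ) (hp : 0 < p) (q : ENNReal) (hq : 0 < q) (k l : ℕ) (hlk : l ≤ k)
    (hl : (1 / q.toReal - 1 / p : ℝ) < (l : ℝ)) :
    ∃ c : ℝ, 0 < c ∧ ∃ N : ℕ, ∀ n : ℕ, N ≤ n → ∃ P : Polynomial ℝ, AbsMono P n k ∧
      0 < LqNorm (fun x => P.eval x) p (-1) 1 ∧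
      c * (n : ℝ) ^ (2 * (l : ℝ) + 2 / p - 2 / q.toReal) *
          LqNorm (fun x => P.eval x) p (-1) 1 ≤
        Lnorm (fun x => (derivative^[l] P).eval x) q (-1) 1 := by
  obtain ⟨c, hc, N, H⟩ := stmt7_general p hp q hq k
  refine ⟨c, hc, N, fun n hn => ?_⟩
  obtain ⟨P, hP, hP_pos, hP_le⟩ := H n hn
  exact ⟨P, hP, hP_pos, hP_le l hlk⟩
end

section
/- For every real number 0 < q < ∞ there exists a constant C = C(q) > 0 with the following property: for every real number c > 0, every positive integer n, every interval [a, b] ⊆ [−1, 1] with 0 < b − a ≤ (c n²)^{−max(q, 1)}, and every real polynomial P of degree at most n, one has ‖P‖_{L_q[a,b]} ≤ (C/c) · ‖P‖_{L_q[−1,1]}. -/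
open Polynomial MeasureTheory

/-!
By Markov's inequality a polynomial of degree at most `n` stays above half of its maximum `M` on an
interval of length of order `1 / n²` around the point where `M` is attained. Hence `M ^ q` is at
most `K n²` times the integral of `|P| ^ q`, with `K = 4 * 2 ^ q` on `[-1, 1]` (Nikolskii), so the
share of this integral that falls on a subinterval of length `d` is at most `min 1 (K n² d)`. Since
`min 1 t ≤ t ^ s` for `0 ≤ s ≤ 1`, the assumption on `d` bounds this share by `(K / c) ^ q`.
-/

open Set

section Markov

variable {P : ℝ[X]} {n : ℕ} {M : ℝ}

theorem abs_eval_iterate_derivative_le_eval_T_mul (hP : P.natDegree ≤ n)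
    (hM : ∀ x ∈ Icc (-1 : ℝ) 1, |P.eval x| ≤ M) (k : ℕ) {x : ℝ} (hx : 1 ≤ x) :
    |(derivative^[k] P).eval x| ≤ (derivative^[k] (Chebyshev.T ℝ n)).eval x * M := by
  have hM0 : 0 ≤ M := (abs_nonneg _).trans (hM 1 (by simp))
  rcases hM0.eq_or_lt with rfl | hMpos
  · have hP0 : P = 0 := P.eq_zero_of_infinite_isRoot <|
      (Icc_infinite (by norm_num)).mono fun u hu => abs_nonpos_iff.1 (hM u hu)
    simp [hP0]
  have scaled (s : ℝ) (hs : |s| = 1) :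
      s * (derivative^[k] P).eval x ≤ (derivative^[k] (Chebyshev.T ℝ n)).eval x * M := by
    have h := Chebyshev.eval_iterate_derivative_le_of_forall_abs_le_one (n := n) (k := k)
      (P := C (s / M) * P) hx (degree_le_of_natDegree_le ((natDegree_C_mul_le _ _).trans hP))
      fun u hu => by
        rw [eval_C_mul, abs_mul, abs_div, hs, abs_of_pos hMpos, one_div, inv_mul_le_one₀ hMpos]
        exact hM u hu
    rwa [iterate_derivative_C_mul, eval_C_mul, div_mul_eq_mul_div, div_le_iff₀ hMpos] at h
  exact abs_le'.2 ⟨by simpa using scaled 1 (by simp), by simpa using scaled (-1) (by simp)⟩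

theorem abs_eval_derivative_endpoint_mul_le (hP : P.natDegree ≤ n) {x y : ℝ}
    (hM : ∀ u ∈ uIcc x y, |P.eval u| ≤ M) :
    |P.derivative.eval y| * |y - x| ≤ 2 * n ^ 2 * M := by
  set L : ℝ[X] := C ((y - x) / 2) * X + C ((x + y) / 2) with hL
  have hdeg : (P.comp L).natDegree ≤ n := by
    simpa using natDegree_comp_le.trans (Nat.mul_le_mul hP natDegree_linear_le)
  have hmem (u : ℝ) (hu : u ∈ Icc (-1 : ℝ) 1) : L.eval u ∈ uIcc x y := by
    have hLu : L.eval u = (y - x) / 2 * u + (x + y) / 2 := by simp [hL]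
    rw [hLu, mem_uIcc]
    rcases le_total x y with h | h
    · exact Or.inl ⟨by nlinarith [hu.1], by nlinarith [hu.2]⟩
    · exact Or.inr ⟨by nlinarith [hu.2], by nlinarith [hu.1]⟩
  have hLone : L.eval 1 = y := by simp only [hL, eval_add, eval_mul, eval_C, eval_X]; ring
  have hchain : (P.comp L).derivative.eval 1 = (y - x) / 2 * P.derivative.eval y := by
    rw [derivative_comp, eval_mul, eval_comp, hLone]
    simp [hL]
  have hMarkov := abs_eval_iterate_derivative_le_eval_T_mul hdeg
    (fun u hu => by simpa only [eval_comp] using hM _ (hmem u hu)) 1 le_rfl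
  rw [Function.iterate_one, hchain, Chebyshev.derivative_T_eval_one, abs_mul, abs_div,
    abs_of_pos (two_pos : (0 : ℝ) < 2)] at hMarkov
  push_cast at hMarkov
  linarith

theorem abs_eval_derivative_mul_le {a b : ℝ} (hP : P.natDegree ≤ n)
    (hM : ∀ u ∈ Icc a b, |P.eval u| ≤ M) {x : ℝ} (hx : x ∈ Icc a b) :
    |P.derivative.eval x| * (b - a) ≤ 4 * n ^ 2 * M := by
  -- `x` is at distance at least `(b - a) / 2` from one of the endpoints.
  have key (y : ℝ) (hy : y ∈ Icc a b) (hfar : (b - a) / 2 ≤ |x - y|) :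
      |P.derivative.eval x| * (b - a) ≤ 4 * n ^ 2 * M := by
    have h := abs_eval_derivative_endpoint_mul_le hP fun u hu =>
      hM u (uIcc_subset_Icc hy hx hu)
    nlinarith [mul_le_mul_of_nonneg_left hfar (abs_nonneg (P.derivative.eval x))]
  have hab : a ≤ b := hx.1.trans hx.2
  rcases le_total ((a + b) / 2) x with h | h
  · exact key a (left_mem_Icc.2 hab) (le_abs.2 (Or.inl (by linarith)))
  · exact key b (right_mem_Icc.2 hab) (le_abs.2 (Or.inr (by linarith)))

end Markov

theorem exists_Icc_add_subset_of_mem {a b z h : ℝ} (hz : z ∈ Icc a b) (hh0 : 0 ≤ h)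
    (hh : h ≤ b - a) : ∃ c, z ∈ Icc c (c + h) ∧ Icc c (c + h) ⊆ Icc a b := by
  refine ⟨max a (z - h), ⟨max_le hz.1 (by linarith), ?_⟩, Icc_subset_Icc (le_max_left _ _) ?_⟩
  · linarith [le_max_right a (z - h)]
  · rw [← le_sub_iff_add_le]
    exact max_le (by linarith) (by linarith [hz.2])

section Nikolskii

variable {P : ℝ[X]} {n : ℕ} {q a b : ℝ}

theorem intervalIntegrable_abs_eval_rpow (P : ℝ[X]) (hq : 0 ≤ q) (a b : ℝ) :
    IntervalIntegrable (fun x => |P.eval x| ^ q) volume a b :=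
  (P.continuous.abs.rpow_const fun _ => Or.inr hq).intervalIntegrable a b

theorem integral_abs_rpow_nonneg (f : ℝ → ℝ) (q : ℝ) (hab : a ≤ b) :
    0 ≤ ∫ x in a..b, |f x| ^ q :=
  intervalIntegral.integral_nonneg hab fun _ _ => Real.rpow_nonneg (abs_nonneg _) q

theorem integral_abs_eval_rpow_mono (P : ℝ[X]) (hq : 0 ≤ q) {c d : ℝ} (hac : a ≤ c)
    (hcd : c ≤ d) (hdb : d ≤ b) :
    ∫ x in c..d, |P.eval x| ^ q ≤ ∫ x in a..b, |P.eval x| ^ q :=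
  intervalIntegral.integral_mono_interval hac hcd hdb
    (Filter.Eventually.of_forall fun _ => Real.rpow_nonneg (abs_nonneg _) q)
    (intervalIntegrable_abs_eval_rpow P hq a b)

theorem abs_eval_div_two_le_of_isMaxOn (hP : P.natDegree ≤ n) {z : ℝ} (hz : z ∈ Icc a b)
    (hmax : IsMaxOn (fun x => |P.eval x|) (Icc a b) z) {x : ℝ} (hx : x ∈ Icc a b)
    (hxz : 8 * n ^ 2 * |x - z| ≤ b - a) : |P.eval z| / 2 ≤ |P.eval x| := by
  rcases (hz.1.trans hz.2).eq_or_lt with rfl | hab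
  · obtain rfl : x = z := by simp_all
    exact half_le_self (abs_nonneg _)
  have hderiv (u : ℝ) (hu : u ∈ Icc a b) :
      ‖P.derivative.eval u‖ ≤ 4 * n ^ 2 * |P.eval z| / (b - a) :=
    (le_div_iff₀ (sub_pos.2 hab)).2 (abs_eval_derivative_mul_le hP hmax hu)
  have hdiff : |P.eval x - P.eval z| ≤ 4 * n ^ 2 * |P.eval z| / (b - a) * |x - z| :=
    (convex_Icc a b).norm_image_sub_le_of_norm_hasDerivWithin_le
      (fun u _ => (P.hasDerivAt u).hasDerivWithinAt) hderiv hz hx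
  have hhalf : 4 * n ^ 2 * |P.eval z| / (b - a) * |x - z| ≤ |P.eval z| / 2 := by
    rw [div_mul_eq_mul_div, div_le_iff₀ (sub_pos.2 hab)]
    nlinarith [mul_le_mul_of_nonneg_left hxz (abs_nonneg (P.eval z))]
  linarith [abs_sub_abs_le_abs_sub (P.eval z) (P.eval x), abs_sub_comm (P.eval z) (P.eval x)]

theorem abs_eval_rpow_mul_le_integral (hq : 0 ≤ q) (hn : 0 < n) (hP : P.natDegree ≤ n) {y : ℝ}
    (hy : y ∈ Icc a b) :
    |P.eval y| ^ q * (b - a) ≤ 8 * 2 ^ q * n ^ 2 * ∫ x in a..b, |P.eval x| ^ q := by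
  obtain ⟨z, hz, hmax⟩ := isCompact_Icc.exists_isMaxOn ⟨y, hy⟩ P.continuous.abs.continuousOn
  have hab : 0 ≤ b - a := sub_nonneg.2 (hy.1.trans hy.2)
  have hn1 : (1 : ℝ) ≤ n ^ 2 := one_le_pow₀ (by exact_mod_cast hn)
  set h := (b - a) / (8 * n ^ 2)
  have hh0 : 0 ≤ h := by positivity
  have hh : 8 * n ^ 2 * h = b - a := mul_div_cancel₀ _ (by positivity)
  obtain ⟨c, hzc, hsub⟩ := exists_Icc_add_subset_of_mem hz hh0 (by nlinarith)
  have hlow (x : ℝ) (hx : x ∈ Icc c (c + h)) : |P.eval z| / 2 ≤ |P.eval x| := by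
    have hxz : |x - z| ≤ h := by
      rw [abs_le]; constructor <;> linarith [hx.1, hx.2, hzc.1, hzc.2]
    refine abs_eval_div_two_le_of_isMaxOn hP hz hmax (hsub hx) ?_
    calc 8 * n ^ 2 * |x - z| ≤ 8 * n ^ 2 * h := by gcongr
      _ = b - a := hh
  have hint : h * (|P.eval z| / 2) ^ q ≤ ∫ x in a..b, |P.eval x| ^ q := by
    have hch : c ≤ c + h := le_add_of_nonneg_right hh0
    calc h * (|P.eval z| / 2) ^ q = ∫ _ in c..c + h, (|P.eval z| / 2) ^ q := by simp
      _ ≤ ∫ x in c..c + h, |P.eval x| ^ q :=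
        intervalIntegral.integral_mono_on hch intervalIntegrable_const
          (intervalIntegrable_abs_eval_rpow P hq _ _)
          fun x hx => Real.rpow_le_rpow (by positivity) (hlow x hx) hq
      _ ≤ ∫ x in a..b, |P.eval x| ^ q :=
        integral_abs_eval_rpow_mono P hq (hsub (left_mem_Icc.2 hch)).1 hch
          (hsub (right_mem_Icc.2 hch)).2
  have hyz : |P.eval y| ≤ |P.eval z| := hmax hy
  calc |P.eval y| ^ q * (b - a) ≤ |P.eval z| ^ q * (b - a) := by gcongr
    _ = 8 * 2 ^ q * n ^ 2 * (h * (|P.eval z| / 2) ^ q) := by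
        rw [Real.div_rpow (abs_nonneg _) zero_le_two, ← hh]
        field_simp
    _ ≤ 8 * 2 ^ q * n ^ 2 * ∫ x in a..b, |P.eval x| ^ q := by gcongr

theorem integral_abs_eval_rpow_mul_le_integral (hq : 0 ≤ q) (hn : 0 < n) (hP : P.natDegree ≤ n)
    {c d : ℝ} (hac : a ≤ c) (hcd : c ≤ d) (hdb : d ≤ b) :
    (∫ x in c..d, |P.eval x| ^ q) * (b - a) ≤
      8 * 2 ^ q * n ^ 2 * (d - c) * ∫ x in a..b, |P.eval x| ^ q := by
  set I := ∫ x in a..b, |P.eval x| ^ q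
  calc (∫ x in c..d, |P.eval x| ^ q) * (b - a) = ∫ x in c..d, |P.eval x| ^ q * (b - a) :=
        (intervalIntegral.integral_mul_const _ _).symm
    _ ≤ ∫ _ in c..d, 8 * 2 ^ q * n ^ 2 * I :=
        intervalIntegral.integral_mono_on hcd
          ((intervalIntegrable_abs_eval_rpow P hq c d).mul_const _) intervalIntegrable_const
          fun x hx => abs_eval_rpow_mul_le_integral hq hn hP ⟨hac.trans hx.1, hx.2.trans hdb⟩
    _ = 8 * 2 ^ q * n ^ 2 * (d - c) * I := by
        rw [intervalIntegral.integral_const, smul_eq_mul]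
        ring

end Nikolskii

theorem min_one_le_rpow {t s : ℝ} (ht : 0 ≤ t) (hs0 : 0 ≤ s) (hs1 : s ≤ 1) : min 1 t ≤ t ^ s := by
  rcases le_total t 1 with h | h
  · exact (min_le_right _ _).trans (Real.self_le_rpow_of_le_one ht h hs1)
  · exact (min_le_left _ _).trans (Real.one_le_rpow h hs0)

theorem min_one_mul_le_div_rpow {q A B d : ℝ} (hq : 0 ≤ q) (hA : 1 ≤ A) (hB : 0 ≤ B)
    (hd0 : 0 ≤ d) (hd : d ≤ B ^ (-(max q 1))) : min 1 (A * d) ≤ (A / B) ^ q := by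
  set p := max q 1
  have hp : 1 ≤ p := le_max_right q 1
  have hA0 : 0 ≤ A := zero_le_one.trans hA
  have hAd : A * d ≤ (A / B) ^ p :=
    calc A * d ≤ A ^ p * B ^ (-p) := by gcongr; exact Real.self_le_rpow_of_one_le hA hp
      _ = (A / B) ^ p := by
        rw [Real.rpow_neg hB, Real.div_rpow hA0 hB, div_eq_mul_inv]
  calc min 1 (A * d) ≤ (A * d) ^ (q / p) :=
        min_one_le_rpow (by positivity) (by positivity)
          (div_le_one_of_le₀ (le_max_left q 1) (by positivity))
    _ ≤ ((A / B) ^ p) ^ (q / p) := by gcongr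
    _ = (A / B) ^ q := by
        rw [← Real.rpow_mul (by positivity), mul_div_cancel₀ q (by positivity)]

theorem lqNorm_le_mul_lqNorm {f : ℝ → ℝ} {q a b c d r : ℝ} (hq : 0 < q) (hab : a ≤ b)
    (hcd : c ≤ d) (hr : 0 ≤ r)
    (h : ∫ x in c..d, |f x| ^ q ≤ r ^ q * ∫ x in a..b, |f x| ^ q) :
    LqNorm f q c d ≤ r * LqNorm f q a b := by
  unfold LqNorm
  calc (∫ x in c..d, |f x| ^ q) ^ (1 / q)
      ≤ (r ^ q * ∫ x in a..b, |f x| ^ q) ^ (1 / q) :=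
        Real.rpow_le_rpow (integral_abs_rpow_nonneg f q hcd) h (by positivity)
    _ = r * (∫ x in a..b, |f x| ^ q) ^ (1 / q) := by
        rw [Real.mul_rpow (by positivity) (integral_abs_rpow_nonneg f q hab),
          ← Real.rpow_mul hr, mul_one_div_cancel hq.ne', Real.rpow_one]

/-- A Remez-type lemma: the `L_q` norm of a polynomial of degree at most `n` over a
sufficiently short subinterval of `[-1,1]` is controlled by its `L_q` norm on `[-1,1]`. -/
theorem stmt8 (q : ℝ) (hq : 0 < q) :
    ∃ C : ℝ, 0 < C ∧ ∀ c : ℝ, 0 < c → ∀ n : ℕ, 0 < n → ∀ a b : ℝ,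
      -1 ≤ a → b ≤ 1 → 0 < b - a → b - a ≤ (c * (n : ℝ) ^ 2) ^ (-(max q 1)) →
      ∀ P : Polynomial ℝ, P.natDegree ≤ n →
        LqNorm (fun x => P.eval x) q a b ≤ (C / c) * LqNorm (fun x => P.eval x) q (-1) 1 := by
  refine ⟨4 * 2 ^ q, by positivity, fun c hc n hn a b ha hb hab hlen P hP => ?_⟩
  have hn1 : (1 : ℝ) ≤ n ^ 2 := one_le_pow₀ (by exact_mod_cast hn)
  have hle : a ≤ b := (sub_pos.1 hab).le
  have hK : (1 : ℝ) ≤ 4 * 2 ^ q := by linarith [Real.one_le_rpow one_le_two hq.le]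
  refine lqNorm_le_mul_lqNorm hq (by norm_num) hle (by positivity) ?_
  set I := ∫ x in (-1 : ℝ)..1, |P.eval x| ^ q
  have hI : 0 ≤ I := integral_abs_rpow_nonneg _ q (by norm_num)
  have hmono : ∫ x in a..b, |P.eval x| ^ q ≤ I := integral_abs_eval_rpow_mono P hq.le ha hle hb
  have hshort : ∫ x in a..b, |P.eval x| ^ q ≤ 4 * 2 ^ q * n ^ 2 * (b - a) * I := by
    linarith [integral_abs_eval_rpow_mul_le_integral hq.le hn hP ha hle hb]
  calc ∫ x in a..b, |P.eval x| ^ q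
      ≤ min 1 (4 * 2 ^ q * n ^ 2 * (b - a)) * I := by
        rw [min_mul_of_nonneg _ _ hI, one_mul]
        exact le_min hmono hshort
    _ ≤ (4 * 2 ^ q * n ^ 2 / (c * n ^ 2)) ^ q * I := by
        gcongr
        exact min_one_mul_le_div_rpow hq.le (one_le_mul_of_one_le_of_one_le hK hn1)
          (by positivity) hab.le hlen
    _ = (4 * 2 ^ q / c) ^ q * I := by rw [mul_div_mul_right _ _ (by positivity)]
end
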